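/- (Scaling property.) Let a, b, c, d be real numbers with ad − bc = 1 and b ≠ 0, let f ∈ L¹(ℝ, ℂ), and let k > 0. Then for every s ∈ ℝ, C_A(f(k·t))(s) = (1/k) · e^{(1 − 1/k²)·(i/2)·(d/b)·s²} · C_A( e^{(1/k² − 1)·(i/2)·(a/b)·t²} f(t) )(s/k). -/

import Mathlib

open MeasureTheory Filter

noncomputable def sqrtTwoPiIb (b : ℝ) : ℂ := (2 * (Real.pi : ℂ) * Complex.I * (b:ℂ)) ^ ((1:ℂ)/2)

noncomputable def CCT (a b d : ℝ) (f : ℝ → ℂ) (s : ℝ) : ℂ :=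
  (1 / sqrtTwoPiIb b) * Complex.exp ((Complex.I/2) * ((d:ℂ)/(b:ℂ)) * (s:ℂ)^2) *
    ∫ t : ℝ, (Real.cos ((s/b) * t) : ℂ) *
      Complex.exp ((Complex.I/2) * ((a:ℂ)/(b:ℂ)) * (t:ℂ)^2) * f t

/-- The quadratic phase `t ↦ exp (z t²)`. The canonical cosine transform uses purely imaginary
rates, `z = (i/2)(a/b)` in the integrand and `z = (i/2)(d/b)` in the prefactor; any complex rate
is allowed here. -/
noncomputable def chirp (z : ℂ) (t : ℝ) : ℂ := Complex.exp (z * (t : ℂ) ^ 2)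

lemma chirp_add (z w : ℂ) (t : ℝ) : chirp (z + w) t = chirp z t * chirp w t := by
  simp only [chirp, add_mul, Complex.exp_add]

lemma chirp_mul_right (z : ℂ) (k t : ℝ) : chirp z (k * t) = chirp (z * (k : ℂ) ^ 2) t := by
  simp only [chirp, Complex.ofReal_mul, mul_pow, mul_assoc]

lemma chirp_div_right (z : ℂ) (t k : ℝ) : chirp z (t / k) = chirp (z / (k : ℂ) ^ 2) t := by
  rw [div_eq_inv_mul, chirp_mul_right, Complex.ofReal_inv, inv_pow, ← div_eq_mul_inv]

lemma CCT_eq_chirp (a b d : ℝ) (f : ℝ → ℂ) (s : ℝ) :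
    CCT a b d f s = 1 / sqrtTwoPiIb b * chirp (Complex.I / 2 * (d / b)) s *
      ∫ t : ℝ, (Real.cos (s / b * t) : ℂ) * chirp (Complex.I / 2 * (a / b)) t * f t :=
  rfl

lemma integral_cos_mul_chirp_smul_comp_mul_left {E : Type*} [NormedAddCommGroup E]
    [NormedSpace ℂ E] (ω : ℝ) (z : ℂ) (f : ℝ → E) {k : ℝ} (hk : k ≠ 0) :
    ∫ t : ℝ, ((Real.cos (ω * t) : ℂ) * chirp z t) • f (k * t) =
      |k⁻¹| • ∫ t : ℝ, ((Real.cos (ω / k * t) : ℂ) * chirp (z / (k : ℂ) ^ 2) t) • f t := by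
  have hk_sq : (k : ℂ) ^ 2 ≠ 0 := pow_ne_zero 2 (Complex.ofReal_ne_zero.mpr hk)
  rw [← Measure.integral_comp_mul_left]
  simp only [chirp_mul_right, div_mul_cancel₀ z hk_sq, ← mul_assoc, div_mul_cancel₀ ω hk]

theorem cct_scaling_general (a b d : ℝ) (hb : b ≠ 0) (f : ℝ → ℂ) (hf : Integrable f)
    (k : ℝ) (hk : k ≠ 0) (s : ℝ) :
    CCT a b d (fun t => f (k * t)) s =
      1 / (|k| : ℝ) * chirp ((1 - 1 / (k : ℂ) ^ 2) * (Complex.I / 2) * (d / b)) s *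
        CCT a b d (fun t => chirp ((1 / (k : ℂ) ^ 2 - 1) * (Complex.I / 2) * (a / b)) t * f t)
          (s / k) := by
  have prefactor (w : ℂ) :
      chirp w s = chirp ((1 - 1 / (k : ℂ) ^ 2) * w) s * chirp w (s / k) := by
    rw [chirp_div_right, ← chirp_add]
    ring_nf
  have integrand (z : ℂ) (t : ℝ) :
      chirp (z / (k : ℂ) ^ 2) t = chirp z t * chirp ((1 / (k : ℂ) ^ 2 - 1) * z) t := by
    rw [← chirp_add]
    ring_nf
  have substitution := integral_cos_mul_chirp_smul_comp_mul_left (s / b)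
    (Complex.I / 2 * (a / b)) f hk
  simp only [smul_eq_mul, Complex.real_smul, abs_inv, Complex.ofReal_inv, integrand,
    div_right_comm s b k] at substitution
  rw [CCT_eq_chirp, CCT_eq_chirp, substitution, prefactor]
  simp only [mul_assoc]
  ring

theorem cct_scaling (a b c d : ℝ) (hb : b ≠ 0) (hA : a * d - b * c = 1)
    (f : ℝ → ℂ) (hf : Integrable f) (k : ℝ) (hk : 0 < k) :
    ∀ s : ℝ, CCT a b d (fun t => f (k * t)) s =
      (1 / (k:ℂ)) * Complex.exp ((1 - 1/(k:ℂ)^2) * (Complex.I/2) * ((d:ℂ)/(b:ℂ)) * (s:ℂ)^2) *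
        CCT a b d (fun t => Complex.exp ((1/(k:ℂ)^2 - 1) * (Complex.I/2) * ((a:ℂ)/(b:ℂ)) * (t:ℂ)^2) * f t)
          (s / k) := by
  simpa only [chirp, abs_of_pos hk] using cct_scaling_general a b d hb f hf k hk.ne'
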